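/- Let U ⊆ ℝⁿ be open and let A₁,…,Aₙ : U → ℝ be smooth with Aᵢ(x) ≠ Aⱼ(x) for all i ≠ j and all x ∈ U, and set A(x) = diag(A₁(x),…,Aₙ(x)). Let N be the Nijenhuis torsion of A, let 𝒦 = 3[N, A²] (Nijenhuis bracket of the (1,2)-tensor field N with the (1,1)-tensor field A²), and define the (1,3)-tensor fields M, Q, P pointwise by M(X,Y,Z) = N(X, A N(Y,Z)) + N(AX, N(Y,Z)) − N(N(X,Z), AY) + N(N(X,Y), AZ) − N(X, N(AY,Z)) − N(X, N(Y,AZ)); Q(X,Y,Z) = 𝒦(AX,AY,Z) − 𝒦(A²X,Y,Z) − 𝒦(X,AY,AZ) + 𝒦(AX,Y,AZ) + 4M(AX,Y,Z) − 2M(X,AY,Z) − 2M(X,Y,AZ); P(X,Y,Z) = A Q(X,AY,Z) + A Q(X,Y,AZ) − A² Q(X,Y,Z) − Q(X,AY,AZ), for X,Y,Z ∈ ℝⁿ. Then P vanishes identically on U if and only if A₁,…,Aₙ satisfy the semi-Hamiltonian (Tsarev) conditions: for all pairwise distinct indices i, j, k and all x ∈ U, ∂/∂xᵏ( (Aⱼ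 − Aᵢ)⁻¹ · ∂Aᵢ/∂xʲ )(x) = ∂/∂xʲ( (Aₖ − Aᵢ)⁻¹ · ∂Aᵢ/∂xᵏ )(x). -/

import Mathlib

open scoped BigOperators
open Matrix

/-- Partial derivative of `f : ℝⁿ → ℝ` in the `j`-th coordinate direction. -/
noncomputable def pd {n : ℕ} (f : (Fin n → ℝ) → ℝ) (j : Fin n) (x : Fin n → ℝ) : ℝ :=
  fderiv ℝ f x (Pi.single j 1)

/-- Components `N^i_{jk}` of the Nijenhuis torsion of a matrix-valued map `A`. -/
noncomputable def nijTorsion {n : ℕ} (A : (Fin n → ℝ) → Matrix (Fin n) (Fin n) ℝ)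
    (x : Fin n → ℝ) (i j k : Fin n) : ℝ :=
  ∑ s : Fin n,
    (A x s j * pd (fun y => A y i k) s x - A x s k * pd (fun y => A y i j) s x
      - A x i s * pd (fun y => A y s k) j x + A x i s * pd (fun y => A y s j) k x)

/-- Skew-symmetrization (with division) of a `3`-index array over its three indices. -/
noncomputable def skew3 {n : ℕ} (T : Fin n → Fin n → Fin n → ℝ) (j1 j2 j3 : Fin n) : ℝ :=
  (1 / 6 : ℝ) * ∑ π : Equiv.Perm (Fin 3),
    ((Equiv.Perm.sign π : ℤ) : ℝ) *
      T (![j1, j2, j3] (π 0)) (![j1, j2, j3] (π 1)) (![j1, j2, j3] (π 2))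

/-- Components of the Nijenhuis bracket `[Q, R]` of a `(1,2)`-tensor field `Q` (skew-symmetric
in its lower indices) with a `(1,1)`-tensor field `R`. -/
noncomputable def nijBracket {n : ℕ} (Q : (Fin n → ℝ) → Fin n → Fin n → Fin n → ℝ)
    (R : (Fin n → ℝ) → Matrix (Fin n) (Fin n) ℝ) (x : Fin n → ℝ)
    (i j1 j2 j3 : Fin n) : ℝ :=
  skew3 (fun a b c => ∑ s : Fin n,
    (Q x s a b * pd (fun y => R y i c) s x
      - R x s c * pd (fun y => Q y i a b) s x
      - 2 * Q x i s b * pd (fun y => R y s c) a x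
      + R x i s * pd (fun y => Q y s a b) c x)) j1 j2 j3

/-- The Nijenhuis torsion as a bilinear map on vectors: `N(X,Y)^i = Σ N^i_{jk} X^j Y^k`. -/
noncomputable def Nmap {n : ℕ} (A : (Fin n → ℝ) → Matrix (Fin n) (Fin n) ℝ)
    (x : Fin n → ℝ) (X Y : Fin n → ℝ) : Fin n → ℝ :=
  fun i => ∑ j : Fin n, ∑ k : Fin n, nijTorsion A x i j k * X j * Y k

/-- The `(1,3)`-tensor `𝒦 = 3[N, A²]` as a trilinear map on vectors. -/
noncomputable def Kmap {n : ℕ} (A : (Fin n → ℝ) → Matrix (Fin n) (Fin n) ℝ)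
    (x : Fin n → ℝ) (X Y Z : Fin n → ℝ) : Fin n → ℝ :=
  fun i => ∑ a : Fin n, ∑ b : Fin n, ∑ c : Fin n,
    3 * nijBracket (nijTorsion A) (fun y => A y * A y) x i a b c * X a * Y b * Z c

/-- The `(1,3)`-tensor `M`. -/
noncomputable def Mmap {n : ℕ} (A : (Fin n → ℝ) → Matrix (Fin n) (Fin n) ℝ)
    (x : Fin n → ℝ) (X Y Z : Fin n → ℝ) : Fin n → ℝ :=
  fun i =>
    Nmap A x X (A x *ᵥ Nmap A x Y Z) i + Nmap A x (A x *ᵥ X) (Nmap A x Y Z) i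
      - Nmap A x (Nmap A x X Z) (A x *ᵥ Y) i + Nmap A x (Nmap A x X Y) (A x *ᵥ Z) i
      - Nmap A x X (Nmap A x (A x *ᵥ Y) Z) i - Nmap A x X (Nmap A x Y (A x *ᵥ Z)) i

/-- The `(1,3)`-tensor `Q`. -/
noncomputable def Qmap {n : ℕ} (A : (Fin n → ℝ) → Matrix (Fin n) (Fin n) ℝ)
    (x : Fin n → ℝ) (X Y Z : Fin n → ℝ) : Fin n → ℝ :=
  fun i =>
    Kmap A x (A x *ᵥ X) (A x *ᵥ Y) Z i - Kmap A x ((A x * A x) *ᵥ X) Y Z i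
      - Kmap A x X (A x *ᵥ Y) (A x *ᵥ Z) i + Kmap A x (A x *ᵥ X) Y (A x *ᵥ Z) i
      + 4 * Mmap A x (A x *ᵥ X) Y Z i - 2 * Mmap A x X (A x *ᵥ Y) Z i
      - 2 * Mmap A x X Y (A x *ᵥ Z) i

/-- The `(1,3)`-tensor `P`. -/
noncomputable def Pmap {n : ℕ} (A : (Fin n → ℝ) → Matrix (Fin n) (Fin n) ℝ)
    (x : Fin n → ℝ) (X Y Z : Fin n → ℝ) : Fin n → ℝ :=
  fun i =>
    (A x *ᵥ Qmap A x X (A x *ᵥ Y) Z) i + (A x *ᵥ Qmap A x X Y (A x *ᵥ Z)) i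
      - ((A x * A x) *ᵥ Qmap A x X Y Z) i - Qmap A x X (A x *ᵥ Y) (A x *ᵥ Z) i

/-!
For `L = diag(A₁, …, Aₙ)` the torsion has components
`N^i_{jk} = G_{ij} δ^i_k - G_{ik} δ^i_j` with `G_{ij} = (A_j - A_i) ∂A_i/∂x^j`, and every
occurrence of `L` acts on components by multiplication with eigenvalues. Hence
`P^i_{pqr} = -(A_i - A_q)(A_i - A_r) Q^i_{pqr}`, which kills the components with `i ∈ {q, r}`.
Since `Q^i_{pqq} = 0` and `Q^i_{pqr} = 0` for `i ∉ {p, q, r}`, only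
`Q^i_{ijk}` with `i, j, k` distinct survives. By symmetry of the second derivatives it equals
`((A_j - A_i)(A_k - A_i))³ (∂Γ^i_{ik}/∂x^j - ∂Γ^i_{ij}/∂x^k)`, where
`Γ^i_{ij} = (A_j - A_i)⁻¹ ∂A_i/∂x^j`; the first factor is nonzero because the eigenvalues are
distinct.
-/

section MultilinearMaps

variable {ι R : Type*} [Fintype ι]

/-- The vector-valued bilinear map with components `B i j k = B^i_{jk}`. -/
def bilinearMap [CommSemiring R] (B : ι → ι → ι → R) (X Y : ι → R) : ι → R :=
  fun i => ∑ j, ∑ k, B i j k * X j * Y k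

/-- The vector-valued trilinear map with components `C i p q r = C^i_{pqr}`. -/
def trilinearMap [CommSemiring R] (C : ι → ι → ι → ι → R) (X Y Z : ι → R) : ι → R :=
  fun i => ∑ p, ∑ q, ∑ r, C i p q r * X p * Y q * Z r

section Semiring

variable [CommSemiring R]

lemma mul_bilinearMap (a : ι → R) (B : ι → ι → ι → R) (X Y : ι → R) :
    a * bilinearMap B X Y = bilinearMap (fun i j k => a i * B i j k) X Y := by
  ext i
  simp only [bilinearMap, Pi.mul_apply, Finset.mul_sum, mul_assoc]

lemma bilinearMap_mul_left (a : ι → R) (B : ι → ι → ι → R) (X Y : ι → R) :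
    bilinearMap B (a * X) Y = bilinearMap (fun i j k => B i j k * a j) X Y := by
  ext i
  simp only [bilinearMap, Pi.mul_apply, mul_assoc]

lemma bilinearMap_mul_right (a : ι → R) (B : ι → ι → ι → R) (X Y : ι → R) :
    bilinearMap B X (a * Y) = bilinearMap (fun i j k => B i j k * a k) X Y := by
  ext i
  simp only [bilinearMap, Pi.mul_apply, mul_assoc, mul_left_comm (a _)]

lemma bilinearMap_bilinearMap_right (B C : ι → ι → ι → R) (X Y Z : ι → R) :
    bilinearMap B X (bilinearMap C Y Z)
      = trilinearMap (fun i p q r => ∑ s, B i p s * C s q r) X Y Z := by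
  ext i
  simp only [bilinearMap, trilinearMap, Finset.mul_sum, Finset.sum_mul]
  refine Finset.sum_congr rfl fun p _ => ?_
  rw [← Finset.sum_comm_cycle]
  refine Finset.sum_congr rfl fun q _ => Finset.sum_congr rfl fun r _ =>
    Finset.sum_congr rfl fun s _ => ?_
  ring

lemma bilinearMap_bilinearMap_left (B C : ι → ι → ι → R) (X Y Z : ι → R) :
    bilinearMap B (bilinearMap C X Y) Z
      = trilinearMap (fun i p q r => ∑ s, B i s r * C s p q) X Y Z := by
  ext i
  simp only [bilinearMap, trilinearMap, Finset.mul_sum, Finset.sum_mul]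
  calc ∑ s, ∑ r, ∑ p, ∑ q, B i s r * (C s p q * X p * Y q) * Z r
      = ∑ s, ∑ p, ∑ q, ∑ r, B i s r * (C s p q * X p * Y q) * Z r :=
        Finset.sum_congr rfl fun s _ => Finset.sum_comm_cycle.symm
    _ = ∑ p, ∑ q, ∑ r, ∑ s, B i s r * (C s p q * X p * Y q) * Z r := by
        rw [Finset.sum_comm]
        exact Finset.sum_congr rfl fun p _ => Finset.sum_comm_cycle.symm
    _ = ∑ p, ∑ q, ∑ r, ∑ s, B i s r * C s p q * X p * Y q * Z r := by
        simp only [mul_assoc]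

lemma trilinearMap_swap (C : ι → ι → ι → ι → R) (X Y Z : ι → R) :
    trilinearMap C X Z Y = trilinearMap (fun i p q r => C i p r q) X Y Z := by
  ext i
  refine Finset.sum_congr rfl fun p _ => ?_
  rw [Finset.sum_comm]
  simp only [mul_right_comm]

lemma mul_trilinearMap (a : ι → R) (C : ι → ι → ι → ι → R) (X Y Z : ι → R) :
    a * trilinearMap C X Y Z = trilinearMap (fun i p q r => a i * C i p q r) X Y Z := by
  ext i
  simp only [trilinearMap, Pi.mul_apply, Finset.mul_sum, mul_assoc]

lemma trilinearMap_mul_left (a : ι → R) (C : ι → ι → ι → ι → R) (X Y Z : ι → R) :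
    trilinearMap C (a * X) Y Z = trilinearMap (fun i p q r => C i p q r * a p) X Y Z := by
  ext i
  simp only [trilinearMap, Pi.mul_apply, mul_assoc]

lemma trilinearMap_mul_middle (a : ι → R) (C : ι → ι → ι → ι → R) (X Y Z : ι → R) :
    trilinearMap C X (a * Y) Z = trilinearMap (fun i p q r => C i p q r * a q) X Y Z := by
  ext i
  simp only [trilinearMap, Pi.mul_apply, mul_assoc, mul_left_comm (a _)]

lemma trilinearMap_mul_right (a : ι → R) (C : ι → ι → ι → ι → R) (X Y Z : ι → R) :
    trilinearMap C X Y (a * Z) = trilinearMap (fun i p q r => C i p q r * a r) X Y Z := by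
  ext i
  simp only [trilinearMap, Pi.mul_apply, mul_assoc, mul_left_comm (a _)]

lemma trilinearMap_add (C D : ι → ι → ι → ι → R) (X Y Z : ι → R) :
    trilinearMap C X Y Z + trilinearMap D X Y Z
      = trilinearMap (fun i p q r => C i p q r + D i p q r) X Y Z := by
  ext i
  simp only [trilinearMap, Pi.add_apply, add_mul, Finset.sum_add_distrib]

lemma trilinearMap_single [DecidableEq ι] (C : ι → ι → ι → ι → R) (i p q r : ι) :
    trilinearMap C (Pi.single p 1) (Pi.single q 1) (Pi.single r 1) i = C i p q r := by
  simp [trilinearMap, Pi.single_apply]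

lemma trilinearMap_eq_zero_iff (C : ι → ι → ι → ι → R) :
    (∀ X Y Z, trilinearMap C X Y Z = 0) ↔ ∀ i p q r, C i p q r = 0 := by
  classical
  refine ⟨fun h i p q r => ?_, fun h X Y Z => ?_⟩
  · rw [← trilinearMap_single C, h, Pi.zero_apply]
  · ext i
    simp [trilinearMap, h]

end Semiring

lemma trilinearMap_sub [CommRing R] (C D : ι → ι → ι → ι → R) (X Y Z : ι → R) :
    trilinearMap C X Y Z - trilinearMap D X Y Z
      = trilinearMap (fun i p q r => C i p q r - D i p q r) X Y Z := by
  ext i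
  simp only [trilinearMap, Pi.sub_apply, sub_mul, Finset.sum_sub_distrib]

lemma diagonal_mulVec_eq_mul [DecidableEq ι] [CommSemiring R] (a X : ι → R) :
    Matrix.diagonal a *ᵥ X = a * X := by
  ext i
  exact Matrix.mulVec_diagonal a X i

end MultilinearMaps

section PartialDerivatives

variable {n : ℕ} {f g : (Fin n → ℝ) → ℝ} {x : Fin n → ℝ}

lemma pd_sub (hf : DifferentiableAt ℝ f x) (hg : DifferentiableAt ℝ g x) (j : Fin n) :
    pd (fun y => f y - g y) j x = pd f j x - pd g j x := by
  simp only [pd, fderiv_fun_sub hf hg, _root_.sub_apply]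

lemma pd_neg (f : (Fin n → ℝ) → ℝ) (j : Fin n) (x : Fin n → ℝ) :
    pd (fun y => -f y) j x = -pd f j x := by
  simp only [pd, fderiv_fun_neg, _root_.neg_apply]

lemma pd_mul (hf : DifferentiableAt ℝ f x) (hg : DifferentiableAt ℝ g x) (j : Fin n) :
    pd (fun y => f y * g y) j x = f x * pd g j x + g x * pd f j x := by
  simp only [pd, fderiv_fun_mul hf hg, _root_.add_apply,
    _root_.smul_apply, smul_eq_mul]

lemma pd_inv (hf : DifferentiableAt ℝ f x) (hx : f x ≠ 0) (j : Fin n) :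
    pd (fun y => (f y)⁻¹) j x = -pd f j x / f x ^ 2 := by
  have hinv := ((hasDerivAt_inv hx).comp_hasFDerivAt x hf.hasFDerivAt).fderiv
  change fderiv ℝ (Inv.inv ∘ f) x _ = _
  rw [hinv]
  simp only [pd, neg_smul, _root_.neg_apply, _root_.smul_apply, smul_eq_mul]
  ring

lemma pd_zero (j : Fin n) (x : Fin n → ℝ) : pd (fun _ => 0) j x = 0 := by
  simp [pd]

lemma pd_ite (c : Prop) [Decidable c] (f : (Fin n → ℝ) → ℝ) (j : Fin n) (x : Fin n → ℝ) :
    pd (fun y => if c then f y else 0) j x = if c then pd f j x else 0 := by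
  split_ifs
  · rfl
  · exact pd_zero j x

lemma differentiableAt_pd (hf : ContDiffAt ℝ 2 f x) (j : Fin n) :
    DifferentiableAt ℝ (pd f j) x :=
  ((hf.fderiv_right (m := 1) le_rfl).differentiableAt one_ne_zero).clm_apply
    (differentiableAt_const _)

lemma pd_pd_comm (hf : ContDiffAt ℝ 2 f x) (j k : Fin n) :
    pd (pd f j) k x = pd (pd f k) j x := by
  have hdf : DifferentiableAt ℝ (fderiv ℝ f) x :=
    (hf.fderiv_right (m := 1) le_rfl).differentiableAt one_ne_zero
  have hsnd (j k : Fin n) : pd (pd f j) k x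
      = fderiv ℝ (fderiv ℝ f) x (Pi.single k 1) (Pi.single j 1) := by
    change fderiv ℝ (fun y => fderiv ℝ f y (Pi.single j 1)) x (Pi.single k 1) = _
    simp [fderiv_clm_apply hdf (differentiableAt_const _)]
  rw [hsnd, hsnd]
  exact hf.isSymmSndFDerivAt (by simp) _ _

end PartialDerivatives

lemma skew3_eq {n : ℕ} (T : Fin n → Fin n → Fin n → ℝ) (p q r : Fin n) :
    skew3 T p q r = (1 / 6) * (T p q r - T q p r - T p r q - T r q p + T q r p + T r p q) := by
  have huniv : (Finset.univ : Finset (Equiv.Perm (Fin 3))) =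
      {1, Equiv.swap 0 1, Equiv.swap 1 2, Equiv.swap 0 2,
        Equiv.swap 0 1 * Equiv.swap 1 2, Equiv.swap 1 2 * Equiv.swap 0 1} := by decide
  have h01 : (Equiv.swap 0 1 : Equiv.Perm (Fin 3)) 2 = 2 := by decide
  have h12 : (Equiv.swap 1 2 : Equiv.Perm (Fin 3)) 0 = 0 := by decide
  have h02 : (Equiv.swap 0 2 : Equiv.Perm (Fin 3)) 1 = 1 := by decide
  have hsign {a b : Fin 3} (hab : a ≠ b) : Equiv.Perm.sign (Equiv.swap a b) = -1 :=
    Equiv.Perm.sign_swap hab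
  rw [skew3, huniv]
  repeat rw [Finset.sum_insert (by decide)]
  simp [h01, h12, h02, hsign, sub_eq_add_neg, add_assoc]

lemma skew3_self_right {n : ℕ} (T : Fin n → Fin n → Fin n → ℝ) (p q : Fin n) :
    skew3 T p q q = 0 := by
  rw [skew3_eq]
  ring

/-- The expression whose skew-symmetrization in `a, b, c` is the Nijenhuis bracket `[Q, R]`. -/
noncomputable def nijBracketPre {n : ℕ} (Q : (Fin n → ℝ) → Fin n → Fin n → Fin n → ℝ)
    (R : (Fin n → ℝ) → Matrix (Fin n) (Fin n) ℝ) (x : Fin n → ℝ) (i a b c : Fin n) : ℝ :=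
  ∑ s, (Q x s a b * pd (fun y => R y i c) s x - R x s c * pd (fun y => Q y i a b) s x
    - 2 * Q x i s b * pd (fun y => R y s c) a x + R x i s * pd (fun y => Q y s a b) c x)

/-- The components of `𝒦 = 3[N, L²]` for a field `L` of matrices. -/
noncomputable def kCoeff {n : ℕ} (L : (Fin n → ℝ) → Matrix (Fin n) (Fin n) ℝ) (x : Fin n → ℝ)
    (i p q r : Fin n) : ℝ :=
  3 * nijBracket (nijTorsion L) (fun y => L y * L y) x i p q r

lemma Nmap_eq_bilinearMap {n : ℕ} (L : (Fin n → ℝ) → Matrix (Fin n) (Fin n) ℝ)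
    (x X Y : Fin n → ℝ) : Nmap L x X Y = bilinearMap (nijTorsion L x) X Y :=
  rfl

lemma Kmap_eq_trilinearMap {n : ℕ} (L : (Fin n → ℝ) → Matrix (Fin n) (Fin n) ℝ)
    (x X Y Z : Fin n → ℝ) : Kmap L x X Y Z = trilinearMap (kCoeff L x) X Y Z :=
  rfl

lemma kCoeff_eq_skew3 {n : ℕ} (L : (Fin n → ℝ) → Matrix (Fin n) (Fin n) ℝ) (x : Fin n → ℝ)
    (i p q r : Fin n) :
    kCoeff L x i p q r
      = 3 * skew3 (nijBracketPre (nijTorsion L) (fun y => L y * L y) x i) p q r :=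
  rfl

lemma kCoeff_self_right {n : ℕ} (L : (Fin n → ℝ) → Matrix (Fin n) (Fin n) ℝ) (x : Fin n → ℝ)
    (i p q : Fin n) : kCoeff L x i p q q = 0 := by
  rw [kCoeff_eq_skew3, skew3_self_right, mul_zero]

section DiagonalField

variable {n : ℕ}

/-- The field of matrices `diag(A₁, …, Aₙ)`, with `A i` the `i`-th eigenvalue as a function
on `ℝⁿ`. -/
def diagonalField (A : Fin n → (Fin n → ℝ) → ℝ) (y : Fin n → ℝ) : Matrix (Fin n) (Fin n) ℝ :=
  Matrix.diagonal fun i => A i y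

/-- The function `(A_j - A_i) ∂A_i/∂x^j`, which is `N^i_{ji} = -N^i_{ij}` for `i ≠ j`. -/
noncomputable def torsionCoeff (A : Fin n → (Fin n → ℝ) → ℝ) (i j : Fin n) (y : Fin n → ℝ) : ℝ :=
  (A j y - A i y) * pd (A i) j y

/-- Tsarev's coefficient `Γ^i_{ij} = (A_j - A_i)⁻¹ ∂A_i/∂x^j`. The semi-Hamiltonian conditions
say `∂Γ^i_{ij}/∂x^k = ∂Γ^i_{ik}/∂x^j`. -/
noncomputable def tsarevCoeff (A : Fin n → (Fin n → ℝ) → ℝ) (i j : Fin n) (y : Fin n → ℝ) : ℝ :=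
  (A j y - A i y)⁻¹ * pd (A i) j y

/-- The components of `M` for `diagonalField A`. -/
noncomputable def mCoeff (A : Fin n → (Fin n → ℝ) → ℝ) (x : Fin n → ℝ) (i p q r : Fin n) : ℝ :=
  ∑ s, ((A s x + A p x - A q x - A r x) * nijTorsion (diagonalField A) x i p s
      * nijTorsion (diagonalField A) x s q r
    - A q x * nijTorsion (diagonalField A) x i s q * nijTorsion (diagonalField A) x s p r
    + A r x * nijTorsion (diagonalField A) x i s r * nijTorsion (diagonalField A) x s p q)

/-- The components of `Q` for `diagonalField A`. -/
noncomputable def qCoeff (A : Fin n → (Fin n → ℝ) → ℝ) (x : Fin n → ℝ) (i p q r : Fin n) : ℝ :=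
  2 * (2 * A p x - A q x - A r x) * mCoeff A x i p q r
    - (A p x - A q x) * (A p x - A r x) * kCoeff (diagonalField A) x i p q r

variable (A : Fin n → (Fin n → ℝ) → ℝ) (x : Fin n → ℝ)

lemma diagonalField_mulVec (X : Fin n → ℝ) : diagonalField A x *ᵥ X = (fun i => A i x) * X :=
  diagonal_mulVec_eq_mul _ X

lemma Mmap_diagonalField (X Y Z : Fin n → ℝ) :
    Mmap (diagonalField A) x X Y Z = trilinearMap (mCoeff A x) X Y Z := by
  set N := Nmap (diagonalField A) x with hN
  set L := diagonalField A x with hL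
  have hM : Mmap (diagonalField A) x X Y Z = N X (L *ᵥ N Y Z) + N (L *ᵥ X) (N Y Z)
      - N (N X Z) (L *ᵥ Y) + N (N X Y) (L *ᵥ Z) - N X (N (L *ᵥ Y) Z) - N X (N Y (L *ᵥ Z)) := rfl
  rw [hM]
  simp only [hN, hL, diagonalField_mulVec, Nmap_eq_bilinearMap, mul_bilinearMap,
    bilinearMap_mul_left, bilinearMap_mul_right, bilinearMap_bilinearMap_left,
    bilinearMap_bilinearMap_right, trilinearMap_mul_left]
  rw [trilinearMap_swap _ X Y Z]
  simp only [trilinearMap_add, trilinearMap_sub]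
  congr 1
  ext i p q r
  simp only [Finset.sum_mul, ← Finset.sum_add_distrib, ← Finset.sum_sub_distrib]
  refine Finset.sum_congr rfl fun s _ => ?_
  ring

lemma Qmap_diagonalField (X Y Z : Fin n → ℝ) :
    Qmap (diagonalField A) x X Y Z = trilinearMap (qCoeff A x) X Y Z := by
  set K := Kmap (diagonalField A) x with hK
  set M := Mmap (diagonalField A) x with hM
  set L := diagonalField A x with hL
  have hQ : Qmap (diagonalField A) x X Y Z = K (L *ᵥ X) (L *ᵥ Y) Z - K ((L * L) *ᵥ X) Y Z
      - K X (L *ᵥ Y) (L *ᵥ Z) + K (L *ᵥ X) Y (L *ᵥ Z) + 4 * M (L *ᵥ X) Y Z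
      - 2 * M X (L *ᵥ Y) Z - 2 * M X Y (L *ᵥ Z) := rfl
  rw [hQ]
  simp only [hK, hM, hL, ← Matrix.mulVec_mulVec, diagonalField_mulVec, Kmap_eq_trilinearMap,
    Mmap_diagonalField, trilinearMap_mul_left, trilinearMap_mul_middle, trilinearMap_mul_right,
    mul_trilinearMap, trilinearMap_add, trilinearMap_sub]
  congr 1
  ext i p q r
  simp only [qCoeff, Pi.ofNat_apply]
  ring

lemma Pmap_diagonalField (X Y Z : Fin n → ℝ) :
    Pmap (diagonalField A) x X Y Z
      = trilinearMap (fun i p q r => -((A i x - A q x) * (A i x - A r x)) * qCoeff A x i p q r)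
          X Y Z := by
  set Q := Qmap (diagonalField A) x with hQ
  set L := diagonalField A x with hL
  have hP : Pmap (diagonalField A) x X Y Z = L *ᵥ Q X (L *ᵥ Y) Z + L *ᵥ Q X Y (L *ᵥ Z)
      - (L * L) *ᵥ Q X Y Z - Q X (L *ᵥ Y) (L *ᵥ Z) := rfl
  rw [hP]
  simp only [hQ, hL, ← Matrix.mulVec_mulVec, diagonalField_mulVec, Qmap_diagonalField,
    trilinearMap_mul_middle, trilinearMap_mul_right, mul_trilinearMap, trilinearMap_add,
    trilinearMap_sub]
  congr 1
  ext i p q r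
  ring

lemma nijTorsion_diagonalField (i j k : Fin n) :
    nijTorsion (diagonalField A) x i j k
      = (if i = k then torsionCoeff A i j x else 0)
        - (if i = j then torsionCoeff A i k x else 0) := by
  simp only [nijTorsion, torsionCoeff, diagonalField, Matrix.diagonal_apply, pd_ite,
    Finset.sum_add_distrib, Finset.sum_sub_distrib, ite_mul, zero_mul, Finset.sum_ite_eq,
    Finset.sum_ite_eq', Finset.mem_univ, if_true]
  split_ifs <;> ring

lemma nijTorsion_diagonalField_left {i k : Fin n} (hik : i ≠ k) :
    nijTorsion (diagonalField A) x i i k = -torsionCoeff A i k x := by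
  simp [nijTorsion_diagonalField, hik]

lemma nijTorsion_diagonalField_of_ne {i j k : Fin n} (hij : i ≠ j) (hik : i ≠ k) :
    nijTorsion (diagonalField A) x i j k = 0 := by
  simp [nijTorsion_diagonalField, hij, hik]

lemma nijTorsion_diagonalField_self (i j : Fin n) :
    nijTorsion (diagonalField A) x i j j = 0 := by
  simp [nijTorsion_diagonalField]

lemma sum_mul_nijTorsion_diagonalField (f : Fin n → ℝ) (q r : Fin n) :
    ∑ s, f s * nijTorsion (diagonalField A) x s q r
      = f r * torsionCoeff A r q x - f q * torsionCoeff A q r x := by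
  simp [nijTorsion_diagonalField, mul_sub, Finset.sum_sub_distrib]

lemma mCoeff_self_right (i p q : Fin n) : mCoeff A x i p q q = 0 := by
  simp [mCoeff, nijTorsion_diagonalField_self]

lemma mCoeff_eq (i p q r : Fin n) :
    mCoeff A x i p q r
      = (A p x - A q x) * nijTorsion (diagonalField A) x i p r * torsionCoeff A r q x
        - (A p x - A r x) * nijTorsion (diagonalField A) x i p q * torsionCoeff A q r x
        - A q x * (nijTorsion (diagonalField A) x i r q * torsionCoeff A r p x
          - nijTorsion (diagonalField A) x i p q * torsionCoeff A p r x)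
        + A r x * (nijTorsion (diagonalField A) x i q r * torsionCoeff A q p x
          - nijTorsion (diagonalField A) x i p r * torsionCoeff A p q x) := by
  simp only [mCoeff, Finset.sum_add_distrib, Finset.sum_sub_distrib,
    sum_mul_nijTorsion_diagonalField]
  ring

lemma mCoeff_eq_zero {i p q r : Fin n} (hip : i ≠ p) (hiq : i ≠ q) (hir : i ≠ r) :
    mCoeff A x i p q r = 0 := by
  simp [mCoeff_eq, nijTorsion_diagonalField_of_ne, *]

lemma mCoeff_self_left {i j k : Fin n} (hij : i ≠ j) (hik : i ≠ k) :
    mCoeff A x i i j k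
      = (A i x - A k x) * torsionCoeff A i j x * torsionCoeff A j k x
        - (A i x - A j x) * torsionCoeff A i k x * torsionCoeff A k j x
        + (A k x - A j x) * torsionCoeff A i j x * torsionCoeff A i k x := by
  rw [mCoeff_eq, nijTorsion_diagonalField_left A x hij, nijTorsion_diagonalField_left A x hik,
    nijTorsion_diagonalField_of_ne A x hij hik, nijTorsion_diagonalField_of_ne A x hik hij]
  ring

lemma nijBracketPre_diagonalField (Q : (Fin n → ℝ) → Fin n → Fin n → Fin n → ℝ) (i a b c : Fin n) :
    nijBracketPre Q (diagonalField A) x i a b c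
      = (if i = c then ∑ s, Q x s a b * pd (A i) s x else 0)
        + (A i x - A c x) * pd (fun y => Q y i a b) c x - 2 * Q x i c b * pd (A c) a x := by
  have hQ : ∑ s, Q x s a b * pd (fun y => diagonalField A y i c) s x
      = if i = c then ∑ s, Q x s a b * pd (A i) s x else 0 := by
    split_ifs with hic <;> simp [diagonalField, hic, pd_zero]
  simp only [nijBracketPre, Finset.sum_add_distrib, Finset.sum_sub_distrib, hQ]
  simp only [diagonalField, Matrix.diagonal_apply, pd_ite, ite_mul, mul_ite, zero_mul, mul_zero,
    Finset.sum_ite_eq, Finset.sum_ite_eq', Finset.mem_univ, if_true]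
  ring

lemma qCoeff_self_right (i p q : Fin n) : qCoeff A x i p q q = 0 := by
  rw [qCoeff, mCoeff_self_right, kCoeff_self_right]
  ring

variable {A x}

lemma nijBracketPre_nijTorsion_sq (hA : ∀ i, DifferentiableAt ℝ (A i) x) (i a b c : Fin n) :
    nijBracketPre (nijTorsion (diagonalField A))
        (fun y => diagonalField A y * diagonalField A y) x i a b c
      = (if i = c then 2 * A i x * (torsionCoeff A b a x * pd (A i) b x
          - torsionCoeff A a b x * pd (A i) a x) else 0)
        + (A i x ^ 2 - A c x ^ 2) * pd (fun y => nijTorsion (diagonalField A) y i a b) c x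
        - 4 * nijTorsion (diagonalField A) x i c b * A c x * pd (A c) a x := by
  have hsq : (fun y => diagonalField A y * diagonalField A y)
      = diagonalField fun i y => A i y * A i y := by
    ext y : 1
    exact Matrix.diagonal_mul_diagonal _ _
  have hpd (i s : Fin n) : pd (fun y => A i y * A i y) s x = 2 * A i x * pd (A i) s x := by
    rw [pd_mul (hA i) (hA i)]
    ring
  have hsum : ∑ s, nijTorsion (diagonalField A) x s a b * (2 * A i x * pd (A i) s x)
      = 2 * A i x * (torsionCoeff A b a x * pd (A i) b x
          - torsionCoeff A a b x * pd (A i) a x) := by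
    simp only [mul_comm (nijTorsion _ _ _ _ _), sum_mul_nijTorsion_diagonalField]
    ring
  rw [hsq, nijBracketPre_diagonalField]
  simp only [hpd, hsum]
  ring

lemma kCoeff_eq_zero (hA : ∀ i, DifferentiableAt ℝ (A i) x) {i p q r : Fin n}
    (hip : i ≠ p) (hiq : i ≠ q) (hir : i ≠ r) : kCoeff (diagonalField A) x i p q r = 0 := by
  simp [kCoeff_eq_skew3, skew3_eq, nijBracketPre_nijTorsion_sq hA,
    nijTorsion_diagonalField_of_ne, pd_zero, *]

lemma kCoeff_self_left (hA : ∀ i, DifferentiableAt ℝ (A i) x) {i j k : Fin n}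
    (hij : i ≠ j) (hik : i ≠ k) :
    kCoeff (diagonalField A) x i i j k
      = (A i x ^ 2 - A j x ^ 2) * pd (torsionCoeff A i k) j x
        - (A i x ^ 2 - A k x ^ 2) * pd (torsionCoeff A i j) k x
        + 2 * torsionCoeff A i k x * (A i x * pd (A i) j x + A k x * pd (A k) j x)
        - 2 * torsionCoeff A i j x * (A i x * pd (A i) k x + A j x * pd (A j) k x)
        + 2 * A i x * (torsionCoeff A k j x * pd (A i) k x
          - torsionCoeff A j k x * pd (A i) j x) := by
  simp only [kCoeff_eq_skew3, skew3_eq, nijBracketPre_nijTorsion_sq hA,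
    nijTorsion_diagonalField, hij, hik, if_true, if_false, zero_sub, sub_zero, pd_neg]
  ring

lemma qCoeff_eq_zero (hA : ∀ i, DifferentiableAt ℝ (A i) x) {i p q r : Fin n}
    (hip : i ≠ p) (hiq : i ≠ q) (hir : i ≠ r) : qCoeff A x i p q r = 0 := by
  rw [qCoeff, mCoeff_eq_zero A x hip hiq hir, kCoeff_eq_zero hA hip hiq hir]
  ring

lemma pd_torsionCoeff {i j : Fin n} (hi : ContDiffAt ℝ 2 (A i) x)
    (hj : DifferentiableAt ℝ (A j) x) (k : Fin n) :
    pd (torsionCoeff A i j) k x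
      = (A j x - A i x) * pd (pd (A i) j) k x
        + (pd (A j) k x - pd (A i) k x) * pd (A i) j x := by
  have hdi : DifferentiableAt ℝ (A i) x := hi.differentiableAt two_ne_zero
  unfold torsionCoeff
  rw [pd_mul (hj.fun_sub hdi) (differentiableAt_pd hi j), pd_sub hj hdi]
  ring

lemma pd_tsarevCoeff {i j : Fin n} (hi : ContDiffAt ℝ 2 (A i) x)
    (hj : DifferentiableAt ℝ (A j) x) (hij : A i x ≠ A j x) (k : Fin n) :
    pd (tsarevCoeff A i j) k x
      = pd (pd (A i) j) k x / (A j x - A i x)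
        - (pd (A j) k x - pd (A i) k x) * pd (A i) j x / (A j x - A i x) ^ 2 := by
  have hdi : DifferentiableAt ℝ (A i) x := hi.differentiableAt two_ne_zero
  have hne : A j x - A i x ≠ 0 := sub_ne_zero.2 hij.symm
  have hsub : DifferentiableAt ℝ (fun y => A j y - A i y) x := hj.fun_sub hdi
  unfold tsarevCoeff
  rw [pd_mul (hsub.fun_inv hne) (differentiableAt_pd hi j), pd_inv hsub hne, pd_sub hj hdi]
  ring

lemma qCoeff_self_left (hA : ∀ i, ContDiffAt ℝ 2 (A i) x) {i j k : Fin n}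
    (hij : A i x ≠ A j x) (hik : A i x ≠ A k x) :
    qCoeff A x i i j k
      = ((A j x - A i x) * (A k x - A i x)) ^ 3
        * (pd (tsarevCoeff A i k) j x - pd (tsarevCoeff A i j) k x) := by
  have hd i : DifferentiableAt ℝ (A i) x := (hA i).differentiableAt two_ne_zero
  have hij' : i ≠ j := fun h => hij (congrArg (A · x) h)
  have hik' : i ≠ k := fun h => hik (congrArg (A · x) h)
  have hj : A j x - A i x ≠ 0 := sub_ne_zero.2 hij.symm
  have hk : A k x - A i x ≠ 0 := sub_ne_zero.2 hik.symm
  rw [qCoeff, mCoeff_self_left A x hij' hik', kCoeff_self_left hd hij' hik',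
    pd_torsionCoeff (hA i) (hd j), pd_torsionCoeff (hA i) (hd k),
    pd_tsarevCoeff (hA i) (hd j) hij, pd_tsarevCoeff (hA i) (hd k) hik, pd_pd_comm (hA i) j k]
  unfold torsionCoeff
  field_simp
  ring

end DiagonalField

theorem P_vanishes_iff_semiHamiltonian_general {n : ℕ} (A : Fin n → (Fin n → ℝ) → ℝ)
    (x : Fin n → ℝ) (hA : ∀ i, ContDiffAt ℝ 2 (A i) x)
    (hdist : ∀ i j : Fin n, i ≠ j → A i x ≠ A j x) :
    (∀ X Y Z : Fin n → ℝ, Pmap (fun y => Matrix.diagonal (fun r => A r y)) x X Y Z = 0)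
      ↔ (∀ i j k : Fin n, i ≠ j → j ≠ k → i ≠ k →
          pd (fun y => (A j y - A i y)⁻¹ * pd (A i) j y) k x
            = pd (fun y => (A k y - A i y)⁻¹ * pd (A i) k y) j x) := by
  change (∀ X Y Z, Pmap (diagonalField A) x X Y Z = 0) ↔ ∀ i j k, i ≠ j → j ≠ k → i ≠ k →
    pd (tsarevCoeff A i j) k x = pd (tsarevCoeff A i k) j x
  have hne {i j} (hij : i ≠ j) : A i x - A j x ≠ 0 := sub_ne_zero.2 (hdist i j hij)
  simp only [Pmap_diagonalField, trilinearMap_eq_zero_iff]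
  constructor
  · intro hP i j k hij _ hik
    have h := hP i i j k
    rw [qCoeff_self_left hA (hdist i j hij) (hdist i k hik)] at h
    simpa [hne hij, hne hik, hne hij.symm, hne hik.symm, sub_eq_zero, eq_comm] using h
  · intro hT i p q r
    by_cases hiq : i = q
    · simp [hiq]
    by_cases hir : i = r
    · simp [hir]
    suffices qCoeff A x i p q r = 0 by rw [this, mul_zero]
    by_cases hip : i = p
    · subst hip
      by_cases hqr : q = r
      · rw [hqr, qCoeff_self_right]
      rw [qCoeff_self_left hA (hdist i q hiq) (hdist i r hir), hT i q r hiq hqr hir, sub_self,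
        mul_zero]
    · exact qCoeff_eq_zero (fun i => (hA i).differentiableAt two_ne_zero) hip hiq hir

theorem P_vanishes_iff_semiHamiltonian {n : ℕ} (U : Set (Fin n → ℝ)) (hU : IsOpen U)
    (A : Fin n → (Fin n → ℝ) → ℝ)
    (hA : ∀ i, ContDiffOn ℝ (⊤ : ℕ∞) (A i) U)
    (hdist : ∀ i j : Fin n, i ≠ j → ∀ x ∈ U, A i x ≠ A j x) :
    (∀ x ∈ U, ∀ X Y Z : Fin n → ℝ,
        Pmap (fun y => Matrix.diagonal (fun r => A r y)) x X Y Z = 0)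
      ↔ (∀ i j k : Fin n, i ≠ j → j ≠ k → i ≠ k → ∀ x ∈ U,
          pd (fun y => (A j y - A i y)⁻¹ * pd (A i) j y) k x
            = pd (fun y => (A k y - A i y)⁻¹ * pd (A i) k y) j x) := by
  have hpt (x) (hx : x ∈ U) := P_vanishes_iff_semiHamiltonian_general A x
    (fun i => ((hA i).contDiffAt (hU.mem_nhds hx)).of_le
      (WithTop.coe_le_coe.2 (le_top : (2 : ℕ∞) ≤ ⊤)))
    fun i j hij => hdist i j hij x hx
  exact ⟨fun hP i j k hij hjk hik x hx => (hpt x hx).1 (hP x hx) i j k hij hjk hik,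
    fun hT x hx => (hpt x hx).2 fun i j k hij hjk hik => hT i j k hij hjk hik x hx⟩
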